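/- Every completely nonunitary C₀-semigroup of isometries V on a complex Hilbert space H is unitarily equivalent to the right-shift semigroup S^F on L²(ℝ₊, F) for some complex Hilbert space F; that is, there exist a Hilbert space F and a unitary U : H → L²(ℝ₊, F) with U V_t U* = S_t^F for all t ≥ 0. -/

import Mathlib

open MeasureTheory ContinuousLinearMap
open scoped ENNReal NNReal InnerProductSpace ComplexInnerProductSpace

noncomputable section

section SemigroupDefs

variable {G : Type} [NormedAddCommGroup G] [InnerProductSpace ℂ G] [CompleteSpace G]

/-- A (C₀-) strongly continuous one-parameter semigroup of bounded operators. -/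
def IsC0Semigroup (V : ℝ≥0 → G →L[ℂ] G) : Prop :=
  V 0 = 1 ∧ (∀ s t : ℝ≥0, V (s + t) = V s ∘L V t) ∧ ∀ x : G, Continuous fun t : ℝ≥0 => V t x

/-- A C₀-semigroup of isometries. -/
def IsIsometrySemigroup (V : ℝ≥0 → G →L[ℂ] G) : Prop :=
  IsC0Semigroup V ∧ ∀ (t : ℝ≥0) (x : G), ‖V t x‖ = ‖x‖

/-- The closed subspace `L` reduces the semigroup `V`: it is invariant under every `V t`
and every `(V t)*`. -/
def ReducedBy (V : ℝ≥0 → G →L[ℂ] G) (L : Submodule ℂ G) : Prop :=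
  (∀ t : ℝ≥0, ∀ x ∈ L, V t x ∈ L) ∧ ∀ t : ℝ≥0, ∀ x ∈ L, adjoint (V t) x ∈ L

/-- `T` restricts to a unitary operator on the subspace `L`. -/
def RestrictsToUnitaryOn (T : G →L[ℂ] G) (L : Submodule ℂ G) : Prop :=
  (∀ x ∈ L, T x ∈ L) ∧ (∀ x ∈ L, ‖T x‖ = ‖x‖) ∧ ∀ y ∈ L, ∃ x ∈ L, T x = y

/-- Every `V t` restricts to a unitary operator on the subspace `L`. -/
def IsUnitarySemigroupOn (V : ℝ≥0 → G →L[ℂ] G) (L : Submodule ℂ G) : Prop :=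
  ∀ t : ℝ≥0, RestrictsToUnitaryOn (V t) L

/-- A unitary C₀-semigroup: every `V t` is a surjective isometry. -/
def IsUnitarySemigroup (V : ℝ≥0 → G →L[ℂ] G) : Prop :=
  IsC0Semigroup V ∧ ∀ t : ℝ≥0, (∀ x : G, ‖V t x‖ = ‖x‖) ∧ Function.Surjective (V t)

/-- `V` is completely nonunitary on the subspace `K`: there is no nonzero closed subspace
of `K` reducing `V` on which every `V t` restricts to a unitary. -/
def IsCnuOn (V : ℝ≥0 → G →L[ℂ] G) (K : Submodule ℂ G) : Prop :=
  ∀ L : Submodule ℂ G, IsClosed (L : Set G) → L ≤ K → ReducedBy V L →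
    IsUnitarySemigroupOn V L → L = ⊥

/-- A completely nonunitary semigroup. -/
def IsCnu (V : ℝ≥0 → G →L[ℂ] G) : Prop := IsCnuOn V ⊤

/-- Two semigroups commute. -/
def SgCommute (V1 V2 : ℝ≥0 → G →L[ℂ] G) : Prop :=
  ∀ t s : ℝ≥0, V1 t ∘L V2 s = V2 s ∘L V1 t

/-- Two semigroups doubly commute. -/
def SgDoublyCommute (V1 V2 : ℝ≥0 → G →L[ℂ] G) : Prop :=
  SgCommute V1 V2 ∧ ∀ t s : ℝ≥0, V1 t ∘L adjoint (V2 s) = adjoint (V2 s) ∘L V1 t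

/-- A completely nonunitary pair of semigroups: no nonzero closed subspace reduces both
semigroups in such a way that both restrict to unitary semigroups. -/
def IsCnuPair (V1 V2 : ℝ≥0 → G →L[ℂ] G) : Prop :=
  ∀ L : Submodule ℂ G, IsClosed (L : Set G) → ReducedBy V1 L → ReducedBy V2 L →
    IsUnitarySemigroupOn V1 L → IsUnitarySemigroupOn V2 L → L = ⊥

/-- A strongly continuous one-parameter unitary group. -/
def IsUnitaryGroup (U : ℝ → G →L[ℂ] G) : Prop :=
  U 0 = 1 ∧ (∀ s t : ℝ, U (s + t) = U s ∘L U t) ∧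
  (∀ (t : ℝ) (x : G), ‖U t x‖ = ‖x‖) ∧ (∀ t : ℝ, Function.Surjective (U t)) ∧
  ∀ x : G, Continuous fun t : ℝ => U t x

/-- Two subspaces are mutually orthogonal. -/
def OrthoSubspaces (A B : Submodule ℂ G) : Prop :=
  ∀ x ∈ A, ∀ y ∈ B, ⟪x, y⟫_ℂ = 0

end SemigroupDefs

/-- Lebesgue measure restricted to `ℝ₊ = [0, ∞)`; `Lp F 2 rplus` plays the role of
`L²(ℝ₊, F)`. -/
def rplus : Measure ℝ := (volume : Measure ℝ).restrict (Set.Ici 0)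

/-- `T` is the right shift by `t` on `L²(ℝ₊, F)`:
`(T f)(x) = f (x - t)` for `x ≥ t` and `(T f)(x) = 0` otherwise. -/
def IsRightShiftOp (F : Type) [NormedAddCommGroup F] [InnerProductSpace ℂ F]
    (t : ℝ) (T : Lp F 2 rplus →L[ℂ] Lp F 2 rplus) : Prop :=
  ∀ f : Lp F 2 rplus,
    (T f : ℝ → F) =ᵐ[rplus] fun x => if t ≤ x then (f : ℝ → F) (x - t) else 0

/-!
The adjoints `T t = (V t)*` form a contraction semigroup, and complete nonunitarity of `V` makes
it stable: the orthogonal complement of `⋃ t, ker (T t)` is `⋂ t, ran (V t)`, on which `V` is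
unitary. Along an orbit `s ↦ T s x` with `x` in the domain of the generator `A` of `T`, the energy
`‖T s x‖²` is lost at the rate `-2 Re ⟪T s x, A T s x⟫ ≥ 0`. Completing the domain for this form
gives a Hilbert space `F` and a map `j` with `‖j x‖² = -2 Re ⟪x, A x⟫`. By stability the whole
energy is eventually lost, so `x ↦ (s ↦ j (T s x))` extends to an isometry `U : H → L²(ℝ₊, F)`,
which turns `T t` into the left shift. Since `U (V t x)` has the same norm as its left shift
`U (T t (V t x)) = U x`, it vanishes on `[0, t)` and is the right shift of `U x`.

The range of `U` is invariant under both shifts, hence under cutting off to `[t, ∞)`. A `g`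
orthogonal to it is therefore pointwise orthogonal to its elements and to their right translates,
so `g s` is orthogonal to the values at `0` of the continuous elements. These include the dense
range of `j`, so `g = 0`.
-/

universe u

section NormedSpaces

variable {𝕜 : Type*} [RCLike 𝕜]

lemma exists_denseRange_inner_eq_core {M : Type u} [AddCommGroup M] [Module 𝕜 M]
    (c : PreInnerProductSpace.Core 𝕜 M) :
    ∃ (F : Type u) (_ : NormedAddCommGroup F) (_ : InnerProductSpace 𝕜 F) (_ : CompleteSpace F)
      (j : M →ₗ[𝕜] F), DenseRange j ∧ ∀ x y, inner 𝕜 (j x) (j y) = c.inner x y := by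
  let : SeminormedAddCommGroup M := InnerProductSpace.Core.toSeminormedAddCommGroup (c := c)
  let : InnerProductSpace 𝕜 M := InnerProductSpace.ofCore c
  exact ⟨UniformSpace.Completion M, inferInstance, inferInstance, inferInstance,
    (UniformSpace.Completion.toComplL (𝕜 := 𝕜) (E := M)).toLinearMap,
    UniformSpace.Completion.denseRange_coe, UniformSpace.Completion.inner_coe⟩

lemma exists_linearIsometry_apply_eq {M E E' : Type*} [AddCommGroup M] [Module 𝕜 M]
    [NormedAddCommGroup E] [NormedSpace 𝕜 E] [NormedAddCommGroup E'] [NormedSpace 𝕜 E']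
    [CompleteSpace E'] {e : M →ₗ[𝕜] E} {f : M →ₗ[𝕜] E'} (he : DenseRange e)
    (h : ∀ m, ‖f m‖ = ‖e m‖) : ∃ U : E →ₗᵢ[𝕜] E', ∀ m, U (e m) = f m := by
  have hext := LinearMap.extendOfNorm_eq he ⟨1, fun m => by rw [h, one_mul]⟩
  refine ⟨⟨(f.extendOfNorm e).toLinearMap, fun x => ?_⟩, hext⟩
  refine he.induction_on (p := fun x => ‖f.extendOfNorm e x‖ = ‖x‖) x
    (isClosed_eq (by fun_prop) (by fun_prop)) fun m => ?_
  rw [hext, h]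

end NormedSpaces

section Integration

variable {α E : Type*} {m : MeasurableSpace α} {μ : Measure α} [NormedAddCommGroup E]

lemma ae_restrict_compl_eq_zero_of_eLpNorm_restrict_eq {p : ℝ≥0∞} (hp₀ : p ≠ 0) (hp : p ≠ ∞)
    {f : α → E} (hf : MemLp f p μ) {s : Set α} (hs : MeasurableSet s)
    (h : eLpNorm f p (μ.restrict s) = eLpNorm f p μ) : f =ᵐ[μ.restrict sᶜ] 0 := by
  have hpos := ENNReal.toReal_pos hp₀ hp
  simp only [eLpNorm_eq_lintegral_rpow_enorm_toReal hp₀ hp] at h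
  have hlint : ∫⁻ a in s, ‖f a‖ₑ ^ p.toReal ∂μ = ∫⁻ a, ‖f a‖ₑ ^ p.toReal ∂μ :=
    ENNReal.rpow_left_injective (one_div_ne_zero hpos.ne') h
  have hfin : ∫⁻ a in s, ‖f a‖ₑ ^ p.toReal ∂μ ≠ ∞ :=
    hlint ▸ (lintegral_rpow_enorm_lt_top_of_eLpNorm_lt_top hp₀ hp hf.2).ne
  have hcompl : ∫⁻ a in sᶜ, ‖f a‖ₑ ^ p.toReal ∂μ = 0 := by
    have hadd := lintegral_add_compl (μ := μ) (fun a => ‖f a‖ₑ ^ p.toReal) hs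
    exact (ENNReal.add_right_inj hfin).1 (by rw [hadd, hlint, add_zero])
  rw [← eLpNorm_eq_zero_iff hf.1.restrict hp₀, eLpNorm_eq_lintegral_rpow_enorm_toReal hp₀ hp,
    hcompl, ENNReal.zero_rpow_of_pos (one_div_pos.2 hpos)]

/-- Only countably many exceptional sets may be discarded, so the separable essential range of `g`
is what replaces separability of `E`. -/
lemma ae_eq_zero_of_forall_inner_of_dense {𝕜 : Type*} [RCLike 𝕜] [InnerProductSpace 𝕜 E]
    [CompleteSpace E] {g : α → E} (hg : AEStronglyMeasurable g μ) {D : Set E} (hD : Dense D)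
    (h : ∀ v ∈ D, ∀ᵐ a ∂μ, inner 𝕜 v (g a) = 0) : g =ᵐ[μ] 0 := by
  obtain ⟨t, ht, hgt⟩ := hg.isSeparable_ae_range
  refine ae_eq_zero_of_forall_dual_of_isSeparable 𝕜 ht (fun c => ?_) hgt
  obtain ⟨u, hu, hlim⟩ := mem_closure_iff_seq_limit.1 (hD ((InnerProductSpace.toDual 𝕜 E).symm c))
  filter_upwards [ae_all_iff.2 fun n => h (u n) (hu n)] with a ha
  have hconst : Filter.Tendsto (fun n => inner 𝕜 (u n) (g a)) Filter.atTop (nhds 0) := by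
    simp only [ha, tendsto_const_nhds]
  have := tendsto_nhds_unique (hlim.inner tendsto_const_nhds) hconst
  simpa only [InnerProductSpace.toDual_symm_apply, Pi.zero_apply] using this

lemma ae_eq_zero_of_forall_setIntegral_eq_zero_of_isPiSystem [NormedSpace ℝ E] [CompleteSpace E]
    {C : Set (Set α)} (hgen : m = MeasurableSpace.generateFrom C) (hC : IsPiSystem C) {f : α → E}
    (hf : Integrable f μ) (huniv : ∫ a, f a ∂μ = 0) (h : ∀ s ∈ C, ∫ a in s, f a ∂μ = 0) :
    f =ᵐ[μ] 0 := by
  suffices h0 : ∀ s, MeasurableSet s → ∫ a in s, f a ∂μ = 0 from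
    hf.ae_eq_zero_of_forall_setIntegral_eq_zero fun s hs _ => h0 s hs
  intro s hs
  induction s, hs using MeasurableSpace.induction_on_inter hgen hC with
  | empty => exact setIntegral_empty
  | basic s hs => exact h s hs
  | compl s hs ih => rw [setIntegral_compl hs hf, huniv, ih, sub_zero]
  | iUnion g hd hg ih =>
    rw [integral_iUnion hg hd hf.integrableOn]
    simp only [ih, tsum_zero]

lemma norm_sq_eq_integral_norm_sq {𝕜 : Type*} [RCLike 𝕜] [InnerProductSpace 𝕜 E] (f : Lp E 2 μ) :
    ‖f‖ ^ 2 = ∫ a, ‖f a‖ ^ 2 ∂μ := by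
  rw [← inner_self_eq_norm_sq (𝕜 := 𝕜), L2.inner_def, ← integral_re (L2.integrable_inner f f)]
  simp only [inner_self_eq_norm_sq]

end Integration

section HalfLine

lemma rplus_restrict_Ici (t : ℝ≥0) :
    rplus.restrict (Set.Ici (t : ℝ)) = volume.restrict (Set.Ici (t : ℝ)) := by
  rw [rplus, Measure.restrict_restrict measurableSet_Ici, Set.Ici_inter_Ici,
    sup_eq_left.2 (NNReal.coe_nonneg t)]

lemma measurePreserving_add_right_rplus (t : ℝ≥0) :
    MeasurePreserving (fun s : ℝ => s + t) rplus (rplus.restrict (Set.Ici (t : ℝ))) := by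
  have h := (measurePreserving_add_right volume (t : ℝ)).restrict_preimage
    (measurableSet_Ici (a := (t : ℝ)))
  rwa [Set.preimage_add_const_Ici, sub_self, ← rplus_restrict_Ici] at h

lemma measurePreserving_sub_right_rplus (t : ℝ≥0) :
    MeasurePreserving (fun s : ℝ => s - t) (rplus.restrict (Set.Ici (t : ℝ))) rplus := by
  have h := (measurePreserving_sub_right volume (t : ℝ)).restrict_preimage
    (measurableSet_Ici (a := (0 : ℝ)))
  rwa [Set.preimage_sub_const_Ici, zero_add, ← rplus_restrict_Ici] at h

lemma ae_rplus_sub {P : ℝ → Prop} (h : ∀ᵐ s ∂rplus, P s) (t : ℝ≥0) :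
    ∀ᵐ s ∂rplus, (t : ℝ) ≤ s → P (s - t) :=
  (ae_restrict_iff' measurableSet_Ici).1
    ((measurePreserving_sub_right_rplus t).quasiMeasurePreserving.ae h)

lemma ae_rplus_eq_zero_of_forall_setIntegral_Ici_eq_zero {E : Type*} [NormedAddCommGroup E]
    [NormedSpace ℝ E] [CompleteSpace E] {f : ℝ → E} (hf : Integrable f rplus)
    (h : ∀ t : ℝ≥0, ∫ s in Set.Ici (t : ℝ), f s ∂rplus = 0) : f =ᵐ[rplus] 0 := by
  have hall : ∀ t : ℝ, ∫ s in Set.Ici t, f s ∂rplus = 0 := fun t => by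
    rw [← h t.toNNReal, Real.coe_toNNReal', rplus, Measure.restrict_restrict measurableSet_Ici,
      Measure.restrict_restrict measurableSet_Ici, Set.Ici_inter_Ici, Set.Ici_inter_Ici,
      sup_assoc, sup_idem]
  refine ae_eq_zero_of_forall_setIntegral_eq_zero_of_isPiSystem
    (borel_eq_generateFrom_Ici ℝ) isPiSystem_Ici hf ?_ (Set.forall_mem_range.2 hall)
  rw [← h 0, NNReal.coe_zero, rplus, Measure.restrict_restrict measurableSet_Ici, Set.inter_self]

end HalfLine

section Shift

variable {F : Type*} [NormedAddCommGroup F]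

/-- The right translate of `f` by `t`, extended by zero to the left of `t`. -/
def rightShift (t : ℝ≥0) (f : ℝ → F) : ℝ → F :=
  fun y => if (t : ℝ) ≤ y then f (y - t) else 0

lemma rightShift_congr_ae (t : ℝ≥0) {f g : ℝ → F} (h : f =ᵐ[rplus] g) :
    rightShift t f =ᵐ[rplus] rightShift t g := by
  filter_upwards [ae_rplus_sub h t] with s hs
  by_cases hts : (t : ℝ) ≤ s <;> simp [rightShift, hts, hs]

variable (𝕜 : Type*) [RCLike 𝕜] [NormedSpace 𝕜 F] {p : ℝ≥0∞} [Fact (1 ≤ p)]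

/-- The left translation `f ↦ f (· + t)` on `Lᵖ(ℝ₊, F)`, which forgets the values on `[0, t)`. -/
def leftShift (t : ℝ≥0) : Lp F p rplus →L[𝕜] Lp F p rplus :=
  (Lp.compMeasurePreservingₗᵢ 𝕜 _ (measurePreserving_add_right_rplus t)).toContinuousLinearMap ∘L
    LpToLpRestrictCLM ℝ F 𝕜 rplus p (Set.Ici t)

lemma coeFn_leftShift (t : ℝ≥0) (f : Lp F p rplus) :
    leftShift 𝕜 t f =ᵐ[rplus] fun s => f (s + t) :=
  (Lp.coeFn_compMeasurePreserving _ (measurePreserving_add_right_rplus t)).trans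
    ((measurePreserving_add_right_rplus t).quasiMeasurePreserving.ae_eq_comp
      (LpToLpRestrictCLM_coeFn 𝕜 _ f))

lemma enorm_leftShift (t : ℝ≥0) (f : Lp F p rplus) :
    ‖leftShift 𝕜 t f‖ₑ = eLpNorm f p (rplus.restrict (Set.Ici (t : ℝ))) := by
  rw [Lp.enorm_def, eLpNorm_congr_ae (coeFn_leftShift 𝕜 t f)]
  exact eLpNorm_comp_measurePreserving (Lp.aestronglyMeasurable f).restrict
    (measurePreserving_add_right_rplus t)

lemma rightShift_leftShift (t : ℝ≥0) (f : Lp F p rplus) :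
    rightShift t (leftShift 𝕜 t f) =ᵐ[rplus] (Set.Ici (t : ℝ)).indicator f := by
  filter_upwards [rightShift_congr_ae t (coeFn_leftShift 𝕜 t f)] with s hs
  rw [hs]
  simp [rightShift, Set.indicator]

lemma rightShift_leftShift_of_norm_eq (hp : p ≠ ∞) {t : ℝ≥0} {f : Lp F p rplus}
    (h : ‖leftShift 𝕜 t f‖ = ‖f‖) : rightShift t (leftShift 𝕜 t f) =ᵐ[rplus] f := by
  have hp₀ : p ≠ 0 := (zero_lt_one.trans_le Fact.out).ne'
  have hnorm : eLpNorm f p (rplus.restrict (Set.Ici (t : ℝ))) = eLpNorm f p rplus := by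
    rw [← enorm_leftShift 𝕜, ← Lp.enorm_def, ← ofReal_norm, ← ofReal_norm, h]
  have hzero := ae_restrict_compl_eq_zero_of_eLpNorm_restrict_eq hp₀ hp (Lp.memLp f)
    measurableSet_Ici hnorm
  exact (rightShift_leftShift 𝕜 t f).trans
    (indicator_ae_eq_of_restrict_compl_ae_eq_zero measurableSet_Ici hzero)

end Shift

section ShiftInvariant

variable {𝕜 F : Type*} [RCLike 𝕜] [NormedAddCommGroup F] [InnerProductSpace 𝕜 F]

/-- The subspace `M` of `L²(ℝ₊, F)` is invariant under all left and right translations. -/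
structure IsShiftInvariant (M : Submodule 𝕜 (Lp F 2 rplus)) : Prop where
  leftShift_mem : ∀ (t : ℝ≥0), ∀ f ∈ M, leftShift 𝕜 t f ∈ M
  exists_rightShift : ∀ (t : ℝ≥0), ∀ f ∈ M, ∃ g ∈ M, g =ᵐ[rplus] rightShift t f

namespace IsShiftInvariant

variable {M : Submodule 𝕜 (Lp F 2 rplus)}

/-- `M` is stable under cutting off to `[t, ∞)`, so orthogonality localizes. -/
lemma ae_inner_eq_zero (hM : IsShiftInvariant M) {f g : Lp F 2 rplus} (hf : f ∈ M)
    (hg : g ∈ Mᗮ) : ∀ᵐ s ∂rplus, inner 𝕜 (f s) (g s) = 0 := by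
  refine ae_rplus_eq_zero_of_forall_setIntegral_Ici_eq_zero (L2.integrable_inner f g) fun t => ?_
  obtain ⟨k, hkM, hk⟩ := hM.exists_rightShift t _ (hM.leftShift_mem t f hf)
  rw [← integral_indicator measurableSet_Ici, ← (M.mem_orthogonal g).1 hg k hkM, L2.inner_def]
  refine integral_congr_ae ?_
  filter_upwards [hk.trans (rightShift_leftShift 𝕜 t f)] with s hs
  by_cases hts : (t : ℝ) ≤ s <;> simp [hs, hts]

lemma ae_inner_sub_eq_zero (hM : IsShiftInvariant M) {f g : Lp F 2 rplus} (hf : f ∈ M)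
    (hg : g ∈ Mᗮ) (t : ℝ≥0) :
    ∀ᵐ s ∂rplus, (t : ℝ) ≤ s → inner 𝕜 (f (s - t)) (g s) = 0 := by
  obtain ⟨k, hkM, hk⟩ := hM.exists_rightShift t f hf
  filter_upwards [hk, hM.ae_inner_eq_zero hkM hg] with s hs hinner hts
  rwa [hs, rightShift, if_pos hts] at hinner

/-- Evaluating at the grid translates `t = ⌊s n⌋₊ / n ≤ s` makes `w (s - t) → w 0` while only
countably many null sets are discarded. -/
lemma ae_inner_apply_zero_eq_zero (hM : IsShiftInvariant M) {f g : Lp F 2 rplus} (hf : f ∈ M)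
    (hg : g ∈ Mᗮ) {w : ℝ → F} (hw : Continuous w) (hfw : f =ᵐ[rplus] w) :
    ∀ᵐ s ∂rplus, inner 𝕜 (w 0) (g s) = 0 := by
  have hgrid : ∀ᵐ s ∂rplus, ∀ k n : ℕ, (k / n : ℝ) ≤ s → inner 𝕜 (w (s - k / n)) (g s) = 0 := by
    refine ae_all_iff.2 fun k => ae_all_iff.2 fun n => ?_
    have hcoe : ((k / n : ℝ≥0) : ℝ) = k / n := by push_cast; rfl
    filter_upwards [hM.ae_inner_sub_eq_zero hf hg (k / n), ae_rplus_sub hfw (k / n)] with s hs hsw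
    rw [hcoe] at hs hsw
    exact fun hks => hsw hks ▸ hs hks
  filter_upwards [hgrid, ae_restrict_mem measurableSet_Ici] with s hs (hs0 : 0 ≤ s)
  have hlim : Filter.Tendsto (fun n : ℕ => s - ⌊s * n⌋₊ / n) Filter.atTop (nhds 0) := by
    simpa [Function.comp_def] using
      ((tendsto_nat_floor_mul_div_atTop hs0).comp tendsto_natCast_atTop_atTop).const_sub s
  have hinner := ((hw.tendsto 0).comp hlim).inner (𝕜 := 𝕜) (tendsto_const_nhds (x := g s))
  refine tendsto_nhds_unique hinner (tendsto_const_nhds.congr fun n => (hs _ n ?_).symm)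
  exact div_le_of_le_mul₀ n.cast_nonneg hs0 (Nat.floor_le (by positivity))

lemma eq_top_of_dense [CompleteSpace F] (hM : IsShiftInvariant M)
    (hclosed : IsClosed (M : Set (Lp F 2 rplus)))
    (hdense : Dense {v : F | ∃ w : ℝ → F, Continuous w ∧ w 0 = v ∧ ∃ f ∈ M, f =ᵐ[rplus] w}) :
    M = ⊤ := by
  have : CompleteSpace M := hclosed.completeSpace_coe
  rw [← Submodule.orthogonal_eq_bot_iff, Submodule.eq_bot_iff]
  intro g hg
  rw [Lp.eq_zero_iff_ae_eq_zero]
  refine ae_eq_zero_of_forall_inner_of_dense (𝕜 := 𝕜) (Lp.aestronglyMeasurable g) hdense ?_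
  rintro _ ⟨w, hw, rfl, f, hf, hfw⟩
  exact hM.ae_inner_apply_zero_eq_zero hf hg hw hfw

end IsShiftInvariant

end ShiftInvariant

section Generator

/-- The graph of the infinitesimal generator of `T`: the pairs `(x, y)` such that `t ↦ T t x` has
right derivative `y` at `0`. -/
def generatorGraph {E : Type*} [NormedAddCommGroup E] [NormedSpace ℂ E]
    (T : ℝ≥0 → E →L[ℂ] E) : Submodule ℂ (E × E) where
  carrier := {p | HasDerivWithinAt (fun s : ℝ => T s.toNNReal p.1) p.2 (Set.Ici 0) 0}
  add_mem' hp hq := by simpa using hp.fun_add hq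
  zero_mem' := by simpa using hasDerivWithinAt_const (0 : ℝ) (Set.Ici 0) (0 : E)
  smul_mem' c p hp := by simpa using hp.fun_const_smul c

variable {H : Type} [NormedAddCommGroup H] [InnerProductSpace ℂ H]
  {T : ℝ≥0 → H →L[ℂ] H}

namespace IsC0Semigroup

lemma zero_apply (hT : IsC0Semigroup T) (x : H) : T 0 x = x := by
  rw [hT.1, one_apply_eq_self]

lemma add_apply (hT : IsC0Semigroup T) (s t : ℝ≥0) (x : H) : T (s + t) x = T s (T t x) := by
  rw [hT.2.1, comp_apply]

lemma continuous_orbit (hT : IsC0Semigroup T) (x : H) : Continuous fun t => T t x := hT.2.2 x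

lemma continuous_toNNReal_orbit (hT : IsC0Semigroup T) (x : H) :
    Continuous fun s : ℝ => T s.toNNReal x :=
  (hT.continuous_orbit x).comp continuous_real_toNNReal

lemma prodMap_mem_generatorGraph (hT : IsC0Semigroup T) (t : ℝ≥0) {p : H × H}
    (hp : p ∈ generatorGraph T) : (T t).prodMap (T t) p ∈ generatorGraph T := by
  have hderiv : HasDerivWithinAt (fun s : ℝ => T t (T s.toNNReal p.1)) (T t p.2) (Set.Ici 0) 0 :=
    ((T t).restrictScalars ℝ).hasFDerivAt.comp_hasDerivWithinAt 0 hp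
  simp only [← hT.add_apply, add_comm t] at hderiv
  change HasDerivWithinAt (fun s : ℝ => T s.toNNReal (T t p.1)) (T t p.2) (Set.Ici 0) 0
  simpa only [hT.add_apply] using hderiv

/-- The semigroup induced by `T` on the graph of its generator, with the graph norm. -/
def onGraph (hT : IsC0Semigroup T) (t : ℝ≥0) : generatorGraph T →L[ℂ] generatorGraph T :=
  ((T t).prodMap (T t)).restrict fun _ => hT.prodMap_mem_generatorGraph t

lemma onGraph_zero_apply (hT : IsC0Semigroup T) (p : generatorGraph T) : hT.onGraph 0 p = p :=
  Subtype.ext <| Prod.ext (hT.zero_apply _) (hT.zero_apply _)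

lemma onGraph_add_apply (hT : IsC0Semigroup T) (s t : ℝ≥0) (p : generatorGraph T) :
    hT.onGraph (s + t) p = hT.onGraph s (hT.onGraph t p) :=
  Subtype.ext <| Prod.ext (hT.add_apply s t _) (hT.add_apply s t _)

lemma continuous_onGraph (hT : IsC0Semigroup T) (p : generatorGraph T) :
    Continuous fun s : ℝ => hT.onGraph s.toNNReal p :=
  ((hT.continuous_toNNReal_orbit _).prodMk (hT.continuous_toNNReal_orbit _)).subtype_mk _

lemma hasDerivWithinAt_orbit (hT : IsC0Semigroup T) (p : generatorGraph T) {s : ℝ} (hs : 0 ≤ s) :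
    HasDerivWithinAt (fun r : ℝ => T r.toNNReal p.1.1) (T s.toNNReal p.1.2) (Set.Ici s) s := by
  have hshift : HasDerivWithinAt (fun r : ℝ => T (r - s).toNNReal (T s.toNNReal p.1.1))
      ((1 : ℝ) • T s.toNNReal p.1.2) (Set.Ici s) s :=
    HasDerivWithinAt.scomp_of_eq s (hT.onGraph s.toNNReal p).2
      ((hasDerivWithinAt_id s _).sub_const s)
      (fun r hr => Set.mem_Ici.2 (sub_nonneg.2 hr)) (sub_self s).symm
  rw [one_smul] at hshift
  refine hshift.congr (fun r hr => ?_) ?_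
  · rw [← hT.add_apply, ← Real.toNNReal_add (sub_nonneg.2 hr) hs, sub_add_cancel]
  · rw [sub_self, Real.toNNReal_zero, hT.zero_apply]

lemma hasDerivWithinAt_norm_sq_orbit (hT : IsC0Semigroup T) (p : generatorGraph T) {s : ℝ}
    (hs : 0 ≤ s) :
    HasDerivWithinAt (fun r : ℝ => ‖T r.toNNReal p.1.1‖ ^ 2)
      (2 * (⟪T s.toNNReal p.1.1, T s.toNNReal p.1.2⟫_ℂ).re) (Set.Ici s) s := by
  let : InnerProductSpace ℝ H := InnerProductSpace.rclikeToReal ℂ H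
  exact (hT.hasDerivWithinAt_orbit p hs).norm_sq

lemma antitone_norm_orbit (hT : IsC0Semigroup T) (hcontr : ∀ t x, ‖T t x‖ ≤ ‖x‖) (x : H) :
    Antitone fun t => ‖T t x‖ := fun s t hst => by
  obtain ⟨r, rfl⟩ := exists_add_of_le hst
  simpa only [add_comm s, hT.add_apply] using hcontr r (T s x)

lemma re_inner_nonpos_of_mem_generatorGraph (hT : IsC0Semigroup T)
    (hcontr : ∀ t x, ‖T t x‖ ≤ ‖x‖) (p : generatorGraph T) : (⟪p.1.1, p.1.2⟫_ℂ).re ≤ 0 := by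
  have hderiv := hT.hasDerivWithinAt_norm_sq_orbit p le_rfl
  have hanti : Antitone fun r : ℝ => ‖T r.toNNReal p.1.1‖ ^ 2 := fun r s hrs =>
    pow_le_pow_left₀ (norm_nonneg _)
      (hT.antitone_norm_orbit hcontr p.1.1 (Real.toNNReal_mono hrs)) 2
  have hnonpos := hderiv.nonpos_of_antitoneOn (uniqueDiffOn_Ici 0 0 Set.self_mem_Ici).accPt
    (hanti.antitoneOn _)
  rw [Real.toNNReal_zero, hT.zero_apply, hT.zero_apply] at hnonpos
  linarith

lemma apply_integral_orbit [CompleteSpace H] (hT : IsC0Semigroup T) (x : H) {h t : ℝ}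
    (hh : 0 ≤ h) (ht : 0 ≤ t) :
    T t.toNNReal (∫ s in 0..h, T s.toNNReal x) = ∫ s in t..h + t, T s.toNNReal x := by
  rw [← ContinuousLinearMap.intervalIntegral_comp_comm _
    ((hT.continuous_toNNReal_orbit x).intervalIntegrable 0 h)]
  calc ∫ s in 0..h, T t.toNNReal (T s.toNNReal x)
      = ∫ s in 0..h, T (s + t).toNNReal x := by
        refine intervalIntegral.integral_congr fun s hs => ?_
        rw [Set.uIcc_of_le hh] at hs
        simp only [add_comm s, Real.toNNReal_add ht hs.1, hT.add_apply]
    _ = ∫ s in t..h + t, T s.toNNReal x := by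
        rw [intervalIntegral.integral_comp_add_right (fun s => T s.toNNReal x), zero_add]

lemma integral_orbit_mem_generatorGraph [CompleteSpace H] (hT : IsC0Semigroup T) (x : H)
    {h : ℝ} (hh : 0 ≤ h) :
    (∫ s in 0..h, T s.toNNReal x, T h.toNNReal x - x) ∈ generatorGraph T := by
  have hcont := hT.continuous_toNNReal_orbit x
  have hint := fun a b : ℝ => hcont.intervalIntegrable (μ := volume) a b
  have hprim : ∀ a : ℝ, HasDerivAt (fun t => ∫ s in 0..t, T s.toNNReal x) (T a.toNNReal x) a :=
    fun a => hcont.integral_hasStrictDerivAt 0 a |>.hasDerivAt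
  have hderiv : HasDerivAt
      (fun t => (∫ s in 0..h + t, T s.toNNReal x) - ∫ s in 0..t, T s.toNNReal x)
      (T h.toNNReal x - x) 0 := by
    have h0 := hprim 0
    rw [Real.toNNReal_zero, hT.zero_apply] at h0
    exact (HasDerivAt.comp_const_add h 0 (by simpa using hprim h)).sub h0
  refine hderiv.hasDerivWithinAt.congr_of_mem (fun t ht => ?_) Set.self_mem_Ici
  rw [hT.apply_integral_orbit x hh ht,
    intervalIntegral.integral_interval_sub_left (hint 0 (h + t)) (hint 0 t)]

lemma denseRange_generatorGraph_fst [CompleteSpace H] (hT : IsC0Semigroup T) :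
    DenseRange ((LinearMap.fst ℂ H H).domRestrict (generatorGraph T)) := fun x => by
  have hderiv : HasDerivWithinAt (fun t => ∫ s in (0 : ℝ)..t, T s.toNNReal x) x (Set.Ioi 0) 0 := by
    have h0 := ((hT.continuous_toNNReal_orbit x).integral_hasStrictDerivAt 0 0).hasDerivAt
    rw [Real.toNNReal_zero, hT.zero_apply] at h0
    exact h0.hasDerivWithinAt
  rw [hasDerivWithinAt_iff_tendsto_slope' Set.self_notMem_Ioi] at hderiv
  refine mem_closure_of_tendsto hderiv ?_
  filter_upwards [self_mem_nhdsWithin] with h (hh : 0 < h)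
  refine ⟨((h⁻¹ : ℝ) : ℂ) • ⟨_, hT.integral_orbit_mem_generatorGraph x hh.le⟩, ?_⟩
  simpa [slope_def_module] using Complex.coe_smul h⁻¹ _

end IsC0Semigroup

end Generator

section BoundaryMap

variable {H : Type} [NormedAddCommGroup H] [InnerProductSpace ℂ H]
  {T : ℝ≥0 → H →L[ℂ] H} {F : Type*} [NormedAddCommGroup F] [InnerProductSpace ℂ F]

/-- `j` is a boundary map for the generator of `T`: `‖j p‖²` is the rate `-d/dt ‖T t x‖²` at
`t = 0` at which the orbit of `p = (x, y)` loses energy. For the left shift on `L²(ℝ₊, F)` the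
evaluation `f ↦ f 0` is one. -/
def IsBoundaryMap (T : ℝ≥0 → H →L[ℂ] H) (j : generatorGraph T →ₗ[ℂ] F) : Prop :=
  ∀ p, ‖j p‖ ^ 2 = -(2 * (⟪p.1.1, p.1.2⟫_ℂ).re)

/-- The dissipation form `-(⟪x, A y⟫ + ⟪A x, y⟫)` on the graph of the generator `A` of a
contraction semigroup. -/
abbrev dissipationCore (hT : IsC0Semigroup T) (hcontr : ∀ t x, ‖T t x‖ ≤ ‖x‖) :
    PreInnerProductSpace.Core ℂ (generatorGraph T) where
  inner p q := -(⟪p.1.1, q.1.2⟫_ℂ + ⟪p.1.2, q.1.1⟫_ℂ)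
  conj_inner_symm p q := by
    simp only [map_neg, map_add, inner_conj_symm, add_comm]
  re_inner_nonneg p := by
    have hre : (⟪p.1.2, p.1.1⟫_ℂ).re = (⟪p.1.1, p.1.2⟫_ℂ).re := inner_re_symm (𝕜 := ℂ) _ _
    have hnonpos := hT.re_inner_nonpos_of_mem_generatorGraph hcontr p
    simp only [RCLike.re_eq_complex_re, Complex.neg_re, Complex.add_re, hre]
    linarith
  add_left p q r := by
    simp only [Submodule.coe_add, Prod.fst_add, Prod.snd_add, inner_add_left]
    ring
  smul_left p q c := by
    simp only [Submodule.coe_smul, Prod.smul_fst, Prod.smul_snd, inner_smul_left]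
    ring

lemma exists_isBoundaryMap_denseRange (hT : IsC0Semigroup T) (hcontr : ∀ t x, ‖T t x‖ ≤ ‖x‖) :
    ∃ (F : Type) (_ : NormedAddCommGroup F) (_ : InnerProductSpace ℂ F) (_ : CompleteSpace F)
      (j : generatorGraph T →ₗ[ℂ] F), IsBoundaryMap T j ∧ DenseRange j := by
  obtain ⟨F, iF, iF', iF'', j, hdense, hj⟩ := exists_denseRange_inner_eq_core
    (dissipationCore hT hcontr)
  refine ⟨F, iF, iF', iF'', j, fun p => ?_, hdense⟩
  have hself : ⟪j p, j p⟫_ℂ = -(⟪p.1.1, p.1.2⟫_ℂ + ⟪p.1.2, p.1.1⟫_ℂ) := hj p p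
  have hre : (⟪p.1.2, p.1.1⟫_ℂ).re = (⟪p.1.1, p.1.2⟫_ℂ).re := inner_re_symm (𝕜 := ℂ) _ _
  rw [← inner_self_eq_norm_sq (𝕜 := ℂ), hself, RCLike.re_eq_complex_re, Complex.neg_re,
    Complex.add_re, hre, two_mul]

namespace IsBoundaryMap

variable {j : generatorGraph T →ₗ[ℂ] F}

lemma continuous (hj : IsBoundaryMap T j) : Continuous j := by
  refine AddMonoidHomClass.continuous_of_bound j 2 fun p => ?_
  refine abs_le_of_sq_le_sq' ?_ (by positivity) |>.2
  calc ‖j p‖ ^ 2 = 2 * -(⟪p.1.1, p.1.2⟫_ℂ).re := by rw [hj p, mul_neg]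
    _ ≤ 2 * (‖p.1.1‖ * ‖p.1.2‖) := by
      gcongr
      exact (neg_le_abs _).trans ((Complex.abs_re_le_norm _).trans (norm_inner_le_norm _ _))
    _ ≤ 2 * (‖p‖ * ‖p‖) := by
      gcongr
      exacts [norm_fst_le p.1, norm_snd_le p.1]
    _ ≤ (2 * ‖p‖) ^ 2 := by nlinarith [sq_nonneg ‖p‖]

lemma continuous_orbit (hj : IsBoundaryMap T j) (hT : IsC0Semigroup T) (p : generatorGraph T) :
    Continuous fun s : ℝ => j (hT.onGraph s.toNNReal p) :=
  hj.continuous.comp (hT.continuous_onGraph p)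

lemma integral_norm_sq_orbit (hj : IsBoundaryMap T j) (hT : IsC0Semigroup T)
    (p : generatorGraph T) {t : ℝ} (ht : 0 ≤ t) :
    ∫ s in 0..t, ‖j (hT.onGraph s.toNNReal p)‖ ^ 2 = ‖p.1.1‖ ^ 2 - ‖T t.toNNReal p.1.1‖ ^ 2 := by
  have hcont : Continuous fun r : ℝ => -‖T r.toNNReal p.1.1‖ ^ 2 :=
    ((hT.continuous_toNNReal_orbit _).norm.pow 2).neg
  have hderiv : ∀ s ∈ Set.Ioo 0 t, HasDerivWithinAt (fun r : ℝ => -‖T r.toNNReal p.1.1‖ ^ 2)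
      (‖j (hT.onGraph s.toNNReal p)‖ ^ 2) (Set.Ioi s) s := fun s hs => by
    rw [hj]
    exact ((hT.hasDerivWithinAt_norm_sq_orbit p hs.1.le).mono Set.Ioi_subset_Ici_self).fun_neg
  rw [intervalIntegral.integral_eq_sub_of_hasDeriv_right_of_le ht hcont.continuousOn hderiv
    (((hj.continuous_orbit hT p).norm.pow 2).intervalIntegrable _ _),
    Real.toNNReal_zero, hT.zero_apply]
  ring

lemma tendsto_integral_norm_sq_orbit (hj : IsBoundaryMap T j) (hT : IsC0Semigroup T)
    (hstab : ∀ x, Filter.Tendsto (fun t => T t x) Filter.atTop (nhds 0)) (p : generatorGraph T) :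
    Filter.Tendsto (fun t => ∫ s in (0 : ℝ)..t, ‖j (hT.onGraph s.toNNReal p)‖ ^ 2) Filter.atTop
      (nhds (‖p.1.1‖ ^ 2)) := by
  have hlim : Filter.Tendsto (fun t : ℝ => ‖p.1.1‖ ^ 2 - ‖T t.toNNReal p.1.1‖ ^ 2) Filter.atTop
      (nhds (‖p.1.1‖ ^ 2)) := by
    simpa using (((hstab p.1.1).comp Real.tendsto_toNNReal_atTop).norm.pow 2).const_sub _
  refine hlim.congr' ?_
  filter_upwards [Filter.eventually_ge_atTop 0] with t ht
  exact (hj.integral_norm_sq_orbit hT p ht).symm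

lemma integrable_norm_sq_orbit (hj : IsBoundaryMap T j) (hT : IsC0Semigroup T)
    (hstab : ∀ x, Filter.Tendsto (fun t => T t x) Filter.atTop (nhds 0)) (p : generatorGraph T) :
    Integrable (fun s : ℝ => ‖j (hT.onGraph s.toNNReal p)‖ ^ 2) rplus := by
  rw [rplus, ← restrict_Ioi_eq_restrict_Ici]
  refine integrableOn_Ioi_of_intervalIntegral_norm_tendsto (‖p.1.1‖ ^ 2) 0 (fun t => ?_)
    Filter.tendsto_id ?_
  · exact (((hj.continuous_orbit hT p).norm.pow 2).intervalIntegrable 0 t).1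
  · simpa only [norm_pow, norm_norm, id] using hj.tendsto_integral_norm_sq_orbit hT hstab p

lemma integral_rplus_norm_sq_orbit (hj : IsBoundaryMap T j) (hT : IsC0Semigroup T)
    (hstab : ∀ x, Filter.Tendsto (fun t => T t x) Filter.atTop (nhds 0)) (p : generatorGraph T) :
    ∫ s, ‖j (hT.onGraph s.toNNReal p)‖ ^ 2 ∂rplus = ‖p.1.1‖ ^ 2 := by
  have hint := hj.integrable_norm_sq_orbit hT hstab p
  rw [rplus, ← restrict_Ioi_eq_restrict_Ici] at hint ⊢
  exact tendsto_nhds_unique (intervalIntegral_tendsto_integral_Ioi 0 hint Filter.tendsto_id)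
    (hj.tendsto_integral_norm_sq_orbit hT hstab p)

lemma memLp_orbit (hj : IsBoundaryMap T j) (hT : IsC0Semigroup T)
    (hstab : ∀ x, Filter.Tendsto (fun t => T t x) Filter.atTop (nhds 0)) (p : generatorGraph T) :
    MemLp (fun s : ℝ => j (hT.onGraph s.toNNReal p)) 2 rplus :=
  (memLp_two_iff_integrable_sq_norm (hj.continuous_orbit hT p).aestronglyMeasurable).2
    (hj.integrable_norm_sq_orbit hT hstab p)

/-- The map `(x, y) ↦ (s ↦ j (T s x, T s y))` from the graph of the generator into `L²(ℝ₊, F)`. -/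
def orbitLp (hj : IsBoundaryMap T j) (hT : IsC0Semigroup T)
    (hstab : ∀ x, Filter.Tendsto (fun t => T t x) Filter.atTop (nhds 0)) :
    generatorGraph T →ₗ[ℂ] Lp F 2 rplus where
  toFun p := (hj.memLp_orbit hT hstab p).toLp
  map_add' p q := by
    rw [← MemLp.toLp_add]
    congr 1
    ext s
    simp only [map_add, Pi.add_apply]
  map_smul' c p := by
    rw [RingHom.id_apply, ← MemLp.toLp_const_smul]
    congr 1
    ext s
    simp only [map_smul, Pi.smul_apply]

lemma coeFn_orbitLp (hj : IsBoundaryMap T j) (hT : IsC0Semigroup T)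
    (hstab : ∀ x, Filter.Tendsto (fun t => T t x) Filter.atTop (nhds 0)) (p : generatorGraph T) :
    hj.orbitLp hT hstab p =ᵐ[rplus] fun s => j (hT.onGraph s.toNNReal p) :=
  (hj.memLp_orbit hT hstab p).coeFn_toLp

lemma norm_orbitLp (hj : IsBoundaryMap T j) (hT : IsC0Semigroup T)
    (hstab : ∀ x, Filter.Tendsto (fun t => T t x) Filter.atTop (nhds 0)) (p : generatorGraph T) :
    ‖hj.orbitLp hT hstab p‖ = ‖p.1.1‖ := by
  rw [← sq_eq_sq₀ (norm_nonneg _) (norm_nonneg _), norm_sq_eq_integral_norm_sq (𝕜 := ℂ),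
    ← hj.integral_rplus_norm_sq_orbit hT hstab p]
  refine integral_congr_ae ?_
  filter_upwards [hj.coeFn_orbitLp hT hstab p] with s hs
  rw [hs]

lemma leftShift_orbitLp (hj : IsBoundaryMap T j) (hT : IsC0Semigroup T)
    (hstab : ∀ x, Filter.Tendsto (fun t => T t x) Filter.atTop (nhds 0)) (t : ℝ≥0)
    (p : generatorGraph T) :
    leftShift ℂ t (hj.orbitLp hT hstab p) = hj.orbitLp hT hstab (hT.onGraph t p) := by
  refine Lp.ext ?_
  filter_upwards [coeFn_leftShift ℂ t (hj.orbitLp hT hstab p),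
    (measurePreserving_add_right_rplus t).quasiMeasurePreserving.ae
      (ae_restrict_of_ae (hj.coeFn_orbitLp hT hstab p)),
    hj.coeFn_orbitLp hT hstab (hT.onGraph t p), ae_restrict_mem measurableSet_Ici]
    with s hshift hs hst (hs0 : 0 ≤ s)
  rw [hshift, hs, hst, Real.toNNReal_add hs0 t.coe_nonneg, Real.toNNReal_coe, hT.onGraph_add_apply]

lemma exists_linearIsometry_intertwining [CompleteSpace H] [CompleteSpace F]
    (hj : IsBoundaryMap T j) (hT : IsC0Semigroup T)
    (hstab : ∀ x, Filter.Tendsto (fun t => T t x) Filter.atTop (nhds 0)) :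
    ∃ U : H →ₗᵢ[ℂ] Lp F 2 rplus, (∀ t x, leftShift ℂ t (U x) = U (T t x)) ∧
      ∀ p : generatorGraph T, U p.1.1 =ᵐ[rplus] fun s => j (hT.onGraph s.toNNReal p) := by
  have hdense := hT.denseRange_generatorGraph_fst
  obtain ⟨U, hU⟩ := exists_linearIsometry_apply_eq hdense (hj.norm_orbitLp hT hstab)
  replace hU : ∀ p : generatorGraph T, U p.1.1 = hj.orbitLp hT hstab p := hU
  refine ⟨U, fun t x => ?_, fun p => hU p ▸ hj.coeFn_orbitLp hT hstab p⟩
  refine hdense.induction_on (p := fun x => leftShift ℂ t (U x) = U (T t x)) x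
    (isClosed_eq (by fun_prop) (by fun_prop)) fun p => ?_
  calc leftShift ℂ t (U p.1.1) = hj.orbitLp hT hstab (hT.onGraph t p) := by
        rw [hU, hj.leftShift_orbitLp]
    _ = U (T t p.1.1) := (hU (hT.onGraph t p)).symm

end IsBoundaryMap

end BoundaryMap

section Stability

variable {H : Type} [NormedAddCommGroup H] [InnerProductSpace ℂ H] {T : ℝ≥0 → H →L[ℂ] H}

lemma IsC0Semigroup.monotone_ker (hT : IsC0Semigroup T) (hcontr : ∀ t x, ‖T t x‖ ≤ ‖x‖) :
    Monotone fun t => (T t).ker := fun s t hst x (hx : T s x = 0) => by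
  have hle : ‖T t x‖ ≤ ‖T s x‖ := hT.antitone_norm_orbit hcontr x hst
  rwa [hx, norm_zero, norm_le_zero_iff] at hle

lemma IsC0Semigroup.tendsto_atTop_zero_of_topologicalClosure_iSup_ker (hT : IsC0Semigroup T)
    (hcontr : ∀ t x, ‖T t x‖ ≤ ‖x‖) (hdense : (⨆ t, (T t).ker).topologicalClosure = ⊤) (x : H) :
    Filter.Tendsto (fun t => T t x) Filter.atTop (nhds 0) := by
  have hmono := hT.monotone_ker hcontr
  refine Metric.tendsto_nhds.2 fun ε hε => ?_
  obtain ⟨y, hy, hxy⟩ := Metric.mem_closure_iff.1 (hdense.ge (Submodule.mem_top (x := x))) ε hε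
  obtain ⟨t₀, hyt₀⟩ := (Submodule.mem_iSup_of_directed _ hmono.directed_le).1 hy
  filter_upwards [Filter.eventually_ge_atTop t₀] with t ht
  have hyt : T t y = 0 := hmono ht hyt₀
  calc dist (T t x) 0 = ‖T t (x - y)‖ := by rw [dist_zero_right, map_sub, hyt, sub_zero]
    _ ≤ ‖x - y‖ := hcontr t _
    _ < ε := by rwa [← dist_eq_norm]

end Stability

section Isometry

variable {H : Type} [NormedAddCommGroup H] [InnerProductSpace ℂ H]

/-- The unitary part `⋂ t, ran (V t)` of a semigroup of isometries in its Wold decomposition. -/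
def unitaryPart (V : ℝ≥0 → H →L[ℂ] H) : Submodule ℂ H := ⨅ t, (V t).range

variable [CompleteSpace H] {V : ℝ≥0 → H →L[ℂ] H}

namespace IsIsometrySemigroup

lemma adjoint_apply_apply (hV : IsIsometrySemigroup V) (t : ℝ≥0) (x : H) :
    adjoint (V t) (V t x) = x :=
  DFunLike.congr_fun ((norm_map_iff_adjoint_comp_self (V t)).1 (hV.2 t)) x

lemma norm_adjoint_apply_le (hV : IsIsometrySemigroup V) (t : ℝ≥0) (x : H) :
    ‖adjoint (V t) x‖ ≤ ‖x‖ := by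
  have hnorm : ‖adjoint (V t)‖ ≤ 1 := by
    rw [LinearIsometryEquiv.norm_map]
    exact (V t).opNorm_le_bound zero_le_one fun y => by rw [hV.2, one_mul]
  simpa only [one_mul] using (adjoint (V t)).le_of_opNorm_le hnorm x

lemma adjoint_add_apply (hV : IsIsometrySemigroup V) (s t : ℝ≥0) (x : H) :
    adjoint (V (s + t)) x = adjoint (V s) (adjoint (V t) x) := by
  rw [add_comm, hV.1.2.1, adjoint_comp, comp_apply]

lemma dist_adjoint_apply_le (hV : IsIsometrySemigroup V) (s t : ℝ≥0) (x : H) :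
    dist (adjoint (V s) x) (adjoint (V t) x) ≤ dist x (V (nndist s t) x) := by
  wlog hst : s ≤ t generalizing s t
  · rw [dist_comm, nndist_comm]
    exact this t s (le_of_not_ge hst)
  obtain ⟨r, rfl⟩ := exists_add_of_le hst
  have hr : nndist s (s + r) = r := by
    rw [NNReal.nndist_eq, add_tsub_cancel_left, tsub_eq_zero_of_le hst, max_eq_right zero_le]
  calc dist (adjoint (V s) x) (adjoint (V (s + r)) x)
      = ‖adjoint (V s) (adjoint (V r) (V r x - x))‖ := by
        rw [map_sub, hV.adjoint_apply_apply, map_sub, hV.adjoint_add_apply, dist_eq_norm]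
    _ ≤ ‖V r x - x‖ :=
        (hV.norm_adjoint_apply_le s _).trans (hV.norm_adjoint_apply_le r _)
    _ = dist x (V (nndist s (s + r)) x) := by rw [hr, dist_comm, dist_eq_norm]

lemma isC0Semigroup_adjoint (hV : IsIsometrySemigroup V) :
    IsC0Semigroup fun t => adjoint (V t) := by
  refine ⟨?_, fun s t => ContinuousLinearMap.ext (hV.adjoint_add_apply s t), fun x => ?_⟩
  · change adjoint (V 0) = 1
    rw [hV.1.1, ← star_eq_adjoint, star_one]
  refine continuous_iff_continuousAt.2 fun s => tendsto_iff_dist_tendsto_zero.2 ?_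
  refine squeeze_zero (fun _ => dist_nonneg) (fun t => hV.dist_adjoint_apply_le t s x) ?_
  have hcont : Continuous fun t => dist x (V (nndist t s) x) :=
    continuous_const.dist ((hV.1.continuous_orbit x).comp (continuous_id.nndist continuous_const))
  simpa only [nndist_self, hV.1.zero_apply, dist_self] using hcont.tendsto s

lemma isClosed_range (hV : IsIsometrySemigroup V) (t : ℝ≥0) :
    IsClosed ((V t).range : Set H) :=
  (AddMonoidHomClass.isometry_of_norm (V t) (hV.2 t)).isClosedEmbedding.isClosed_range

lemma isClosed_unitaryPart (hV : IsIsometrySemigroup V) : IsClosed (unitaryPart V : Set H) := by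
  rw [unitaryPart, Submodule.coe_iInf]
  exact isClosed_iInter hV.isClosed_range

lemma reducedBy_unitaryPart (hV : IsIsometrySemigroup V) : ReducedBy V (unitaryPart V) := by
  refine ⟨fun s x hx => ?_, fun s x hx => ?_⟩ <;>
    refine Submodule.mem_iInf _ |>.2 fun t => ?_
  · obtain ⟨y, rfl⟩ := (Submodule.mem_iInf _).1 hx t
    exact ⟨V s y, by simp only [coe_coe, ← hV.1.add_apply, add_comm s]⟩
  · obtain ⟨y, rfl⟩ := (Submodule.mem_iInf _).1 hx (s + t)
    exact ⟨y, by simp only [coe_coe, hV.1.add_apply, hV.adjoint_apply_apply]⟩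

lemma isUnitarySemigroupOn_unitaryPart (hV : IsIsometrySemigroup V) :
    IsUnitarySemigroupOn V (unitaryPart V) := by
  refine fun t => ⟨hV.reducedBy_unitaryPart.1 t, fun x _ => hV.2 t x, fun y hy => ?_⟩
  refine ⟨adjoint (V t) y, hV.reducedBy_unitaryPart.2 t y hy, ?_⟩
  obtain ⟨x, rfl⟩ := (Submodule.mem_iInf _).1 hy t
  exact congrArg (V t) (hV.adjoint_apply_apply t x)

lemma unitaryPart_eq_bot (hV : IsIsometrySemigroup V) (hcnu : IsCnu V) : unitaryPart V = ⊥ :=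
  hcnu _ hV.isClosed_unitaryPart le_top hV.reducedBy_unitaryPart
    hV.isUnitarySemigroupOn_unitaryPart

lemma orthogonal_iSup_ker_adjoint (hV : IsIsometrySemigroup V) :
    (⨆ t, (adjoint (V t)).ker)ᗮ = unitaryPart V := by
  rw [unitaryPart, ← Submodule.iInf_orthogonal]
  refine iInf_congr fun t => ?_
  rw [orthogonal_ker, adjoint_adjoint, (hV.isClosed_range t).submodule_topologicalClosure_eq]

lemma tendsto_adjoint_atTop_zero (hV : IsIsometrySemigroup V) (hcnu : IsCnu V) (x : H) :
    Filter.Tendsto (fun t => adjoint (V t) x) Filter.atTop (nhds 0) := by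
  refine hV.isC0Semigroup_adjoint.tendsto_atTop_zero_of_topologicalClosure_iSup_ker
    hV.norm_adjoint_apply_le ?_ x
  rw [Submodule.topologicalClosure_eq_top_iff, hV.orthogonal_iSup_ker_adjoint,
    hV.unitaryPart_eq_bot hcnu]

variable {F : Type*} [NormedAddCommGroup F] [InnerProductSpace ℂ F]

lemma ae_eq_rightShift_of_leftShift_adjoint (hV : IsIsometrySemigroup V)
    {U : H →ₗᵢ[ℂ] Lp F 2 rplus} (hU : ∀ t x, leftShift ℂ t (U x) = U (adjoint (V t) x))
    (t : ℝ≥0) (x : H) : U (V t x) =ᵐ[rplus] rightShift t (U x) := by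
  have hleft : leftShift ℂ t (U (V t x)) = U x := by rw [hU, hV.adjoint_apply_apply]
  have hnorm : ‖leftShift ℂ t (U (V t x))‖ = ‖U (V t x)‖ := by
    rw [hleft, U.norm_map, U.norm_map, hV.2]
  exact hleft ▸ (rightShift_leftShift_of_norm_eq ℂ ENNReal.ofNat_ne_top hnorm).symm

lemma isShiftInvariant_range (hV : IsIsometrySemigroup V)
    {U : H →ₗᵢ[ℂ] Lp F 2 rplus} (hU : ∀ t x, leftShift ℂ t (U x) = U (adjoint (V t) x)) :
    IsShiftInvariant U.toLinearMap.range where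
  leftShift_mem t := by
    rintro _ ⟨x, rfl⟩
    exact ⟨adjoint (V t) x, (hU t x).symm⟩
  exists_rightShift t := by
    rintro _ ⟨x, rfl⟩
    exact ⟨_, ⟨V t x, rfl⟩, hV.ae_eq_rightShift_of_leftShift_adjoint hU t x⟩

end IsIsometrySemigroup

end Isometry

/-- **Cooper's theorem (model part).** Every completely nonunitary C₀-semigroup of
isometries is unitarily equivalent to the right-shift semigroup on `L²(ℝ₊, F)` for some
Hilbert space `F`. -/
theorem cnu_semigroup_is_right_shift {H : Type} [NormedAddCommGroup H]
    [InnerProductSpace ℂ H] [CompleteSpace H] (V : ℝ≥0 → H →L[ℂ] H)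
    (hV : IsIsometrySemigroup V) (hcnu : IsCnu V) :
    ∃ (F : Type) (_ : NormedAddCommGroup F) (_ : InnerProductSpace ℂ F) (_ : CompleteSpace F)
      (U : H ≃ₗᵢ[ℂ] Lp F 2 rplus),
      ∀ (t : ℝ≥0) (x : H),
        (U (V t x) : ℝ → F) =ᵐ[rplus]
          fun y => if (t : ℝ) ≤ y then (U x : ℝ → F) (y - (t : ℝ)) else 0 := by
  have hT := hV.isC0Semigroup_adjoint
  obtain ⟨F, _, _, _, j, hj, hdense⟩ :=
    exists_isBoundaryMap_denseRange hT hV.norm_adjoint_apply_le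
  obtain ⟨U, hU, hUj⟩ :=
    hj.exists_linearIsometry_intertwining hT (hV.tendsto_adjoint_atTop_zero hcnu)
  have hrange : U.toLinearMap.range = ⊤ := by
    refine (hV.isShiftInvariant_range hU).eq_top_of_dense
      U.isometry.isClosedEmbedding.isClosed_range (hdense.mono ?_)
    rintro _ ⟨p, rfl⟩
    refine ⟨_, hj.continuous_orbit hT p, ?_, U p.1.1, ⟨p.1.1, rfl⟩, hUj p⟩
    rw [Real.toNNReal_zero, hT.onGraph_zero_apply]
  exact ⟨F, inferInstance, inferInstance, inferInstance,
    LinearIsometryEquiv.ofSurjective U (LinearMap.range_eq_top.1 hrange),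
    hV.ae_eq_rightShift_of_leftShift_adjoint hU⟩
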